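/- Assume (L,N) is graphically admissible and let O_min := ∂_{H^1}(cc(nb_{H^1}(Y), A, H^1)). Then O_min is a minimal set satisfying the graphical adjustment criterion for A,Y,L,N in G, and for every minimal set Z satisfying the criterion: Y and Z\O_min are d-separated by {A} ∪ O_min in G, and A and O_min\Z are d-separated by Z in G. -/

import Mathlib

open Relation Set

namespace CausalGraph

variable {V : Type*} [Fintype V] [DecidableEq V]

/-- `p` is a path in the undirected sense from `u` to `v` along adjacency `Adj`:
a nonempty list of pairwise distinct vertices, consecutive ones adjacent,
starting at `u` and ending at `v`. -/
def IsPath (Adj : V → V → Prop) (u v : V) (p : List V) : Prop :=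
  List.Chain' Adj p ∧ p.head? = some u ∧ p.getLast? = some v ∧ p.Nodup

/-- Ancestors of `S` in the digraph `D` (every vertex is an ancestor of itself). -/
def anc (D : V → V → Prop) (S : Set V) : Set V :=
  {u | ∃ v ∈ S, Relation.ReflTransGen D u v}

/-- Descendants of `S` in the digraph `D` (every vertex is a descendant of itself). -/
def desc (D : V → V → Prop) (S : Set V) : Set V :=
  {u | ∃ v ∈ S, Relation.ReflTransGen D v u}

/-- Parents of vertices of `S` in the digraph `D`. -/
def parents (D : V → V → Prop) (S : Set V) : Set V :=
  {u | ∃ v ∈ S, D u v}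

/-- The digraph `D` is acyclic. -/
def Acyclic (D : V → V → Prop) : Prop :=
  ∀ u v, D u v → ¬ Relation.ReflTransGen D v u

/-- Vertices other than `A` lying on a directed path from `A` to `Y`. -/
def cn (D : V → V → Prop) (A Y : V) : Set V :=
  {v | v ≠ A ∧ Relation.ReflTransGen D A v ∧ Relation.ReflTransGen D v Y}

/-- The forbidden set. -/
def forb (D : V → V → Prop) (A Y : V) : Set V :=
  desc D (cn D A Y) ∪ {A}

/-- Proper back-door graph: delete every edge from `A` into `cn D A Y`. -/
def pbd (D : V → V → Prop) (A Y : V) : V → V → Prop :=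
  fun u v => D u v ∧ ¬(u = A ∧ v ∈ cn D A Y)

/-- `y` is an interior vertex of the list `p` with neighbours `x` and `z` on the path. -/
def InteriorAt (p : List V) (x y z : V) : Prop :=
  ∃ s t : List V, p = s ++ x :: y :: z :: t

/-- The path `p` is blocked by `Z` in the digraph `D`: some interior non-collider
lies in `Z`, or some interior collider has no descendant in `Z`. -/
def Blocked (D : V → V → Prop) (Z : Set V) (p : List V) : Prop :=
  (∃ x y z, InteriorAt p x y z ∧ ¬(D x y ∧ D z y) ∧ y ∈ Z) ∨
  (∃ x y z, InteriorAt p x y z ∧ (D x y ∧ D z y) ∧ ∀ d ∈ desc D {y}, d ∉ Z)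

/-- d-separation of `S` and `T` given `Z` in the digraph `D`. -/
def DSep (D : V → V → Prop) (S T Z : Set V) : Prop :=
  ∀ s ∈ S, ∀ t ∈ T, ∀ p : List V,
    IsPath (fun a b => D a b ∨ D b a) s t p → Blocked D Z p

/-- Moral graph of the subgraph of the digraph `D` induced on `Vs`. -/
def moral (D : V → V → Prop) (Vs : Set V) : SimpleGraph V :=
  SimpleGraph.fromRel (fun u v =>
    u ∈ Vs ∧ v ∈ Vs ∧ (D u v ∨ D v u ∨ ∃ w ∈ Vs, D u w ∧ D v w))

/-- Separation in an undirected graph: every path from `S` to `T` meets `W`. -/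
def USep (H : SimpleGraph V) (S T W : Set V) : Prop :=
  ∀ s ∈ S, ∀ t ∈ T, ∀ p : List V, IsPath H.Adj s t p → ∃ z ∈ W, z ∈ p

/-- `Z` is an `A`–`Y` cut in an undirected graph `H` with vertex set `Vs`. -/
def IsCut (Vs : Set V) (H : SimpleGraph V) (A Y : V) (Z : Set V) : Prop :=
  Z ⊆ Vs ∧ Z ∩ {A, Y} = ∅ ∧ ∀ p : List V, IsPath H.Adj A Y p → ∃ z ∈ Z, z ∈ p

def MinimalCut (Vs : Set V) (H : SimpleGraph V) (A Y : V) (Z : Set V) : Prop :=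
  IsCut Vs H A Y Z ∧ ∀ Z' ⊂ Z, ¬ IsCut Vs H A Y Z'

def MinimumCut (Vs : Set V) (H : SimpleGraph V) (A Y : V) (Z : Set V) : Prop :=
  IsCut Vs H A Y Z ∧ ∀ Z', IsCut Vs H A Y Z' → Z.ncard ≤ Z'.ncard

/-- Connected component of `y` in `H` restricted to the complement of `U`:
vertices reachable from `y` by paths avoiding `U`. -/
def cc (H : SimpleGraph V) (U : Set V) (y : V) : Set V :=
  {w | ∃ p : List V, IsPath H.Adj y w p ∧ ∀ x ∈ p, x ∉ U}

/-- Boundary of `S` in `H`: vertices outside `S` adjacent to some vertex of `S`. -/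
def bdry (H : SimpleGraph V) (S : Set V) : Set V :=
  {v | v ∉ S ∧ ∃ u ∈ S, H.Adj v u}

/-- The partial order `Z₁ ⊴_H Z₂` between `A`–`Y` cuts. -/
def TLE (H : SimpleGraph V) (A Y : V) (Z₁ Z₂ : Set V) : Prop :=
  USep H {Y} (Z₂ \ Z₁) Z₁ ∧ USep H {A} (Z₁ \ Z₂) Z₂

/-- Ancestors of `{A, Y} ∪ L`. -/
def ancAYL (D : V → V → Prop) (A Y : V) (L : Set V) : Set V :=
  anc D ({A, Y} ∪ L)

/-- The moral graph `H⁰` of the proper back-door graph induced on `an_G({A,Y} ∪ L)`. -/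
def H0 (D : V → V → Prop) (A Y : V) (L : Set V) : SimpleGraph V :=
  moral (pbd D A Y) (ancAYL D A Y L)

/-- The set of vertices removed from `H⁰` when constructing `H¹`. -/
def Ignore (D : V → V → Prop) (A Y : V) (L N : Set V) : Set V :=
  (ancAYL D A Y L \ {A, Y}) ∩ ((Set.univ \ N) ∪ forb D A Y)

/-- Vertex set of `H¹`. -/
def H1verts (D : V → V → Prop) (A Y : V) (L N : Set V) : Set V :=
  ancAYL D A Y L \ Ignore D A Y L N

/-- The non-parametric adjustment efficiency graph `H¹`: delete the vertices of
`Ignore`, join two remaining vertices if they are joined in `H⁰` by a path all of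
whose intermediate vertices are in `Ignore`, and join `A` and `Y` to every vertex
of `L`. -/
def H1 (D : V → V → Prop) (A Y : V) (L N : Set V) : SimpleGraph V :=
  SimpleGraph.fromRel (fun u v =>
    u ∈ H1verts D A Y L N ∧ v ∈ H1verts D A Y L N ∧
      ((∃ p : List V, IsPath (H0 D A Y L).Adj u v p ∧
          ∀ x ∈ p, x ≠ u → x ≠ v → x ∈ Ignore D A Y L N) ∨
        (u = A ∧ v ∈ L) ∨ (u = Y ∧ v ∈ L)))

/-- The graphical adjustment criterion for `A, Y, L, N` in the DAG `D`. -/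
def GAC (D : V → V → Prop) (A Y : V) (L N Z : Set V) : Prop :=
  DSep (pbd D A Y) {A} {Y} Z ∧ Z ∩ forb D A Y = ∅ ∧ L ⊆ Z ∧ Z ⊆ N

def MinimalGAC (D : V → V → Prop) (A Y : V) (L N Z : Set V) : Prop :=
  GAC D A Y L N Z ∧ ∀ Z' ⊂ Z, ¬ GAC D A Y L N Z'

def MinimumGAC (D : V → V → Prop) (A Y : V) (L N Z : Set V) : Prop :=
  GAC D A Y L N Z ∧ ∀ Z', GAC D A Y L N Z' → Z.ncard ≤ Z'.ncard

/-- Graphical admissibility of the pair `(L, N)`. -/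
def Admissible (D : V → V → Prop) (A Y : V) (L N : Set V) : Prop :=
  ∃ Z, GAC D A Y L N Z

end CausalGraph

/-! In an acyclic digraph, d-separation of `s` and `t` by `Z` is separation by `Z` in the moral
graph of the ancestors of `{s, t} ∪ Z`. For the proper back-door graph this turns the adjustment
criterion into separation of `A` from `Y` in `H⁰`. The contraction of `Ignore` leaves only
admissible vertices in `H¹` without changing separation, and the edges from `A` and `Y` to `L`
force `L` into every cut, so the minimal adjustment sets are exactly the minimal `A`–`Y` cuts of
`H¹`.

The set `O_min` is the minimal cut closest to `Y`: it consists of neighbours of `Y`, and the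
`A`-side of any other minimal cut lies inside the `A`-side of `O_min`. This gives two separations in
`H¹`, which come back as d-separations in `G` because `G` and the proper back-door graph differ only
in edges out of `A` into `cn(A, Y)`. Conditioning on `A` makes these irrelevant in the first case;
in the second, no vertex of `cn(A, Y)` is an ancestor of `A` or of an adjustment set. -/

namespace CausalGraph

section Paths

variable {V : Type*} {R : V → V → Prop} {U : Set V} {a b c : V} {l p q : List V}

/-- Reachability along `R` through vertices outside `U`, the starting vertex being unrestricted.
This is the form in which existence of a path avoiding `U` is amenable to induction. -/
def ReachesAvoiding (R : V → V → Prop) (U : Set V) : V → V → Prop :=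
  ReflTransGen fun x y => R x y ∧ y ∉ U

theorem isPath_singleton : IsPath R a a [a] :=
  ⟨List.isChain_singleton a, rfl, rfl, List.nodup_singleton a⟩

theorem isPath_cons_cons :
    IsPath R a b (a :: c :: l) ↔ R a c ∧ a ∉ c :: l ∧ IsPath R c b (c :: l) := by
  constructor
  · rintro ⟨hchain, -, hlast, hnodup⟩
    obtain ⟨hac, hchain⟩ := List.isChain_cons_cons.1 hchain
    obtain ⟨ha, hnodup⟩ := List.nodup_cons.1 hnodup
    exact ⟨hac, ha, hchain, rfl, hlast, hnodup⟩
  · rintro ⟨hac, ha, hchain, -, hlast, hnodup⟩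
    exact ⟨List.isChain_cons_cons.2 ⟨hac, hchain⟩, rfl, hlast, List.nodup_cons.2 ⟨ha, hnodup⟩⟩

theorem IsPath.exists_eq_cons (hp : IsPath R a b p) : ∃ l, p = a :: l :=
  List.head?_eq_some_iff.1 hp.2.1

theorem IsPath.of_append (hp : IsPath R a b (p ++ c :: q)) : IsPath R c b (c :: q) :=
  ⟨(List.isChain_append.1 hp.1).2.1, rfl,
    (List.getLast?_append_cons p c q).symm.trans hp.2.2.1, hp.2.2.2.of_append_right⟩

theorem IsPath.reachesAvoiding (hp : IsPath R a b p) (hU : ∀ x ∈ p, x ∉ U) :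
    ReachesAvoiding R U a b := by
  induction p generalizing a with
  | nil => exact absurd hp.2.1 nofun
  | cons a' l ih =>
    obtain rfl : a' = a := Option.some.inj hp.2.1
    cases l with
    | nil =>
      obtain rfl : a' = b := Option.some.inj hp.2.2.1
      exact .refl
    | cons c l =>
      obtain ⟨hac, -, hcb⟩ := isPath_cons_cons.1 hp
      have hU' : ∀ x ∈ c :: l, x ∉ U := fun x hx => hU x (List.mem_cons_of_mem a' hx)
      exact .head ⟨hac, hU' c List.mem_cons_self⟩ (ih hcb hU')

theorem ReachesAvoiding.exists_isPath (h : ReachesAvoiding R U a b) (ha : a ∉ U) :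
    ∃ p, IsPath R a b p ∧ ∀ x ∈ p, x ∉ U := by
  induction h using ReflTransGen.head_induction_on with
  | refl => exact ⟨[b], isPath_singleton, by simpa using ha⟩
  | @head a c hac _ ih =>
    obtain ⟨p, hp, hpU⟩ := ih hac.2
    by_cases hap : a ∈ p
    · obtain ⟨q, r, rfl⟩ := List.append_of_mem hap
      exact ⟨a :: r, hp.of_append, fun x hx => hpU x (List.mem_append_right q hx)⟩
    · obtain ⟨l, rfl⟩ := hp.exists_eq_cons
      exact ⟨a :: c :: l, isPath_cons_cons.2 ⟨hac.1, hap, hp⟩, List.forall_mem_cons.2 ⟨ha, hpU⟩⟩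

theorem IsPath.ne_last_of_interiorAt {x y z : V} (hp : IsPath R a b p) (h : InteriorAt p x y z) :
    y ≠ b := by
  rintro rfl
  obtain ⟨s, t, rfl⟩ := h
  have hlast : (z :: t).getLast? = some y := by simpa using hp.2.2.1
  have hyzt : (y :: z :: t).Nodup :=
    (hp.2.2.2.sublist (List.sublist_append_right _ _)).of_cons
  exact (List.nodup_cons.1 hyzt).1 (List.mem_of_getLast? hlast)

end Paths

section Components

variable {V : Type*} {H H' : SimpleGraph V} {U U' S T : Set V} {a b c : V}

theorem mem_cc_iff : b ∈ cc H U a ↔ a ∉ U ∧ ReachesAvoiding H.Adj U a b := by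
  constructor
  · rintro ⟨p, hp, hpU⟩
    obtain ⟨l, rfl⟩ := hp.exists_eq_cons
    exact ⟨hpU a List.mem_cons_self, hp.reachesAvoiding hpU⟩
  · rintro ⟨ha, hab⟩
    exact hab.exists_isPath ha

theorem mem_cc_self (ha : a ∉ U) : a ∈ cc H U a :=
  mem_cc_iff.2 ⟨ha, .refl⟩

theorem mem_cc_of_adj (hb : b ∈ cc H U a) (hbc : H.Adj b c) (hc : c ∉ U) : c ∈ cc H U a :=
  mem_cc_iff.2 ⟨(mem_cc_iff.1 hb).1, (mem_cc_iff.1 hb).2.tail ⟨hbc, hc⟩⟩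

theorem mem_cc_trans (hb : b ∈ cc H U a) (hc : c ∈ cc H U b) : c ∈ cc H U a :=
  mem_cc_iff.2 ⟨(mem_cc_iff.1 hb).1, (mem_cc_iff.1 hb).2.trans (mem_cc_iff.1 hc).2⟩

theorem cc_subset (ha : a ∉ U → a ∈ S)
    (hS : ∀ x ∈ cc H U a, x ∈ S → ∀ y, H.Adj x y → y ∉ U → y ∈ S) : cc H U a ⊆ S := by
  intro b hb
  obtain ⟨haU, hab⟩ := mem_cc_iff.1 hb
  clear hb
  induction hab with
  | refl => exact ha haU
  | tail hax hxy ih => exact hS _ (mem_cc_iff.2 ⟨haU, hax⟩) ih _ hxy.1 hxy.2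

theorem notMem_of_mem_cc (hb : b ∈ cc H U a) : b ∉ U :=
  cc_subset (S := Uᶜ) id (fun _ _ _ _ _ => id) hb

theorem mem_cc_symm (hb : b ∈ cc H U a) : a ∈ cc H U b := by
  refine cc_subset (S := {x | a ∈ cc H U x}) mem_cc_self ?_ hb
  intro x hx hax y hxy hy
  exact mem_cc_trans (mem_cc_of_adj (mem_cc_self hy) hxy.symm (notMem_of_mem_cc hx)) hax

theorem cc_subset_cc (hH : ∀ x y, x ∉ U → y ∉ U → H.Adj x y → H'.Adj x y)
    (hU : ∀ x ∈ cc H U a, x ∉ U') : cc H U a ⊆ cc H' U' a := by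
  refine cc_subset (fun ha => mem_cc_self (hU a (mem_cc_self ha))) ?_
  intro x hx hx' y hxy hy
  exact mem_cc_of_adj hx' (hH x y (notMem_of_mem_cc hx) hy hxy) (hU y (mem_cc_of_adj hx hxy hy))

theorem cc_bdry_subset (ha : a ∈ S) : cc H (bdry H S) a ⊆ S := by
  refine cc_subset (fun _ => ha) ?_
  intro x _ hx y hxy hy
  by_contra hyS
  exact hy ⟨hyS, x, hx, hxy.symm⟩

theorem uSep_singleton_iff : USep H {a} {b} U ↔ b ∉ cc H U a := by
  simp only [USep, cc, mem_singleton_iff, forall_eq, mem_ofPred_eq, not_exists, not_and]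
  exact forall₂_congr fun p _ => by push Not; exact exists_congr fun _ => and_comm

theorem uSep_iff_forall_notMem_cc : USep H {a} T U ↔ ∀ t ∈ T, t ∉ cc H U a := by
  simp only [← uSep_singleton_iff, USep, mem_singleton_iff, forall_eq]

end Components

section Cuts

variable {V : Type*} {H : SimpleGraph V} {Vs Z : Set V} {A Y z : V}

/-- The neighbours of `Y` at which the component of `A` away from the neighbourhood of `Y` ends.
For distinct, non-adjacent `A` and `Y` it is the minimal `A`–`Y` cut closest to `Y`; in `H¹` it is
the set `O_min`. -/
def closestCut (H : SimpleGraph V) (A Y : V) : Set V :=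
  bdry H (cc H (H.neighborSet Y) A)

theorem isCut_iff : IsCut Vs H A Y Z ↔ Z ⊆ Vs ∧ A ∉ Z ∧ Y ∉ Z ∧ Y ∉ cc H Z A := by
  have hdisj : Z ∩ {A, Y} = ∅ ↔ A ∉ Z ∧ Y ∉ Z := by
    simp [← disjoint_iff_inter_eq_empty, disjoint_right]
  rw [IsCut, hdisj, ← uSep_singleton_iff, and_assoc]
  simp only [USep, mem_singleton_iff, forall_eq]

theorem IsCut.ne (h : IsCut Vs H A Y Z) : A ≠ Y := by
  rintro rfl
  obtain ⟨-, hA, -, hcc⟩ := isCut_iff.1 h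
  exact hcc (mem_cc_self hA)

theorem IsCut.not_adj (h : IsCut Vs H A Y Z) : ¬ H.Adj A Y := by
  obtain ⟨-, hA, hY, hcc⟩ := isCut_iff.1 h
  exact fun hAY => hcc (mem_cc_of_adj (mem_cc_self hA) hAY hY)

theorem IsCut.mem_of_adj (h : IsCut Vs H A Y Z) (hA : H.Adj A z) (hY : H.Adj Y z) : z ∈ Z := by
  obtain ⟨-, hAZ, hYZ, hcc⟩ := isCut_iff.1 h
  by_contra hz
  exact hcc (mem_cc_of_adj (mem_cc_of_adj (mem_cc_self hAZ) hA hz) hY.symm hYZ)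

theorem IsCut.cc_subset_cc_neighborSet (h : IsCut Vs H A Y Z) :
    cc H Z A ⊆ cc H (H.neighborSet Y) A := by
  obtain ⟨-, -, hY, hcc⟩ := isCut_iff.1 h
  exact cc_subset_cc (fun _ _ _ _ => id) fun x hx hxY => hcc (mem_cc_of_adj hx hxY.symm hY)

theorem MinimalCut.exists_adj (h : MinimalCut Vs H A Y Z) (hz : z ∈ Z) :
    ∃ u ∈ cc H Z A, H.Adj u z := by
  obtain ⟨hZ, hA, hY, hcc⟩ := isCut_iff.1 h.1
  by_contra! hno
  refine h.2 (Z \ {z}) (sdiff_singleton_ssubset.2 hz) (isCut_iff.2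
    ⟨sdiff_subset.trans hZ, fun h => hA h.1, fun h => hY h.1, fun hYcc => hcc ?_⟩)
  refine cc_subset (fun _ => mem_cc_self hA) ?_ hYcc
  intro x _ hx y hxy hy
  refine mem_cc_of_adj hx hxy fun hyZ => hy ⟨hyZ, ?_⟩
  rintro rfl
  exact hno x hx hxy

theorem closestCut_subset_neighborSet : closestCut H A Y ⊆ H.neighborSet Y := by
  rintro o ⟨ho, u, hu, hou⟩
  by_contra hoY
  exact ho (mem_cc_of_adj hu hou.symm hoY)

theorem right_notMem_cc_neighborSet (hne : A ≠ Y) : Y ∉ cc H (H.neighborSet Y) A := by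
  have hsub : cc H (H.neighborSet Y) A ⊆ {Y}ᶜ := by
    refine cc_subset (fun _ => hne) ?_
    rintro x hx - y hxy - rfl
    exact notMem_of_mem_cc hx hxy.symm
  exact fun hY => hsub hY rfl

theorem minimalCut_closestCut (hVs : H.support ⊆ Vs) (hne : A ≠ Y) (hadj : ¬ H.Adj A Y) :
    MinimalCut Vs H A Y (closestCut H A Y) := by
  have hA : A ∈ cc H (H.neighborSet Y) A := mem_cc_self fun h => hadj h.symm
  have hY : Y ∉ closestCut H A Y := fun h => H.irrefl (closestCut_subset_neighborSet h)
  refine ⟨isCut_iff.2 ⟨?_, fun h => h.1 hA, hY, fun h =>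
    right_notMem_cc_neighborSet hne (cc_bdry_subset hA h)⟩, ?_⟩
  · exact fun o ho => hVs ⟨Y, (closestCut_subset_neighborSet ho).symm⟩
  · intro Z hZO hZ
    obtain ⟨hZsub, o, ho, hoZ⟩ := ssubset_iff_exists.1 hZO
    obtain ⟨-, u, hu, hou⟩ := id ho
    have huZ : u ∈ cc H Z A := cc_subset_cc (fun _ _ _ _ => id)
      (fun x hx hxZ => notMem_of_mem_cc hx (closestCut_subset_neighborSet (hZsub hxZ))) hu
    obtain ⟨-, -, hYZ, hcc⟩ := isCut_iff.1 hZ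
    exact hcc (mem_cc_of_adj (mem_cc_of_adj huZ hou.symm hoZ)
      (closestCut_subset_neighborSet ho).symm hYZ)

theorem tle_closestCut (hZ : MinimalCut Vs H A Y Z) : TLE H A Y (closestCut H A Y) Z := by
  obtain ⟨-, -, hY, hcc⟩ := isCut_iff.1 hZ.1
  constructor <;> rw [uSep_iff_forall_notMem_cc]
  · rintro z ⟨hz, hzO⟩ hzY
    obtain ⟨u, hu, huz⟩ := hZ.exists_adj hz
    have hzC : z ∈ cc H (H.neighborSet Y) A := by
      by_contra hzC
      exact hzO ⟨hzC, u, hZ.1.cc_subset_cc_neighborSet hu, huz.symm⟩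
    exact right_notMem_cc_neighborSet hZ.1.ne (cc_bdry_subset hzC (mem_cc_symm hzY))
  · rintro o ⟨ho, -⟩ hoA
    exact hcc (mem_cc_of_adj hoA (closestCut_subset_neighborSet ho).symm hY)

end Cuts

section Ancestors

variable {V : Type*} {D : V → V → Prop} {L S T Z : Set V} {s t u v : V}

theorem subset_anc : S ⊆ anc D S :=
  fun u hu => ⟨u, hu, .refl⟩

theorem mem_anc_of_edge (huv : D u v) (hv : v ∈ anc D S) : u ∈ anc D S := by
  obtain ⟨w, hw, hvw⟩ := hv
  exact ⟨w, hw, .head huv hvw⟩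

theorem anc_subset_anc (h : S ⊆ anc D T) : anc D S ⊆ anc D T := by
  rintro u ⟨v, hv, huv⟩
  obtain ⟨w, hw, hvw⟩ := h hv
  exact ⟨w, hw, huv.trans hvw⟩

theorem anc_mono (h : S ⊆ T) : anc D S ⊆ anc D T :=
  anc_subset_anc (h.trans subset_anc)

theorem anc_union_eq (hLZ : L ⊆ Z) (hZ : Z ⊆ anc D (S ∪ L)) : anc D (S ∪ Z) = anc D (S ∪ L) :=
  (anc_subset_anc (union_subset (subset_union_left.trans subset_anc) hZ)).antisymm
    (anc_mono (union_subset_union_right S hLZ))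

theorem reachesAvoiding_of_notMem_anc (hu : u ∉ anc D Z) (huv : ReflTransGen D u v) :
    ReachesAvoiding D Z u v := by
  induction huv using ReflTransGen.head_induction_on with
  | refl => exact .refl
  | head huw _ ih =>
    have hw := fun hw => hu (mem_anc_of_edge huw hw)
    exact .head ⟨huw, fun hwZ => hw (subset_anc hwZ)⟩ (ih hw)

theorem mem_anc_or_reachesAvoiding (hu : u ∈ anc D ({s, t} ∪ Z)) :
    u ∈ anc D Z ∨ u ∉ Z ∧ (ReachesAvoiding D Z u s ∨ ReachesAvoiding D Z u t) := by
  refine or_iff_not_imp_left.2 fun huZ => ⟨fun h => huZ (subset_anc h), ?_⟩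
  obtain ⟨v, (rfl | rfl) | hv, huv⟩ := hu
  · exact .inl (reachesAvoiding_of_notMem_anc huZ huv)
  · exact .inr (reachesAvoiding_of_notMem_anc huZ huv)
  · exact absurd ⟨v, hv, huv⟩ huZ

theorem Acyclic.not_symm (hD : Acyclic D) (huv : D u v) : ¬ D v u :=
  fun hvu => hD u v huv (.single hvu)

end Ancestors

section DSeparation

variable {V : Type*} {D : V → V → Prop} {S T Z : Set V} {a b c s t u v w : V} {l p q : List V}

/-- The triple `x, y, z` of consecutive vertices of a path does not block it given `Z`: a collider
`y` is an ancestor of `Z`, a non-collider is not in `Z`. -/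
def OpenAt (D : V → V → Prop) (Z : Set V) (x y z : V) : Prop :=
  (D x y ∧ D z y ∧ y ∈ anc D Z) ∨ (¬ (D x y ∧ D z y) ∧ y ∉ Z)

/-- d-connection of two vertices given `Z`: some path between them is not blocked. -/
def DConnected (D : V → V → Prop) (Z : Set V) (s t : V) : Prop :=
  ∃ p, IsPath (fun a b => D a b ∨ D b a) s t p ∧ ¬ Blocked D Z p

theorem not_blocked_iff :
    ¬ Blocked D Z p ↔ ∀ x y z, InteriorAt p x y z → OpenAt D Z x y z := by
  have hdesc : ∀ y, (∀ d ∈ desc D {y}, d ∉ Z) ↔ y ∉ anc D Z := fun y =>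
    ⟨fun h ⟨d, hd, hyd⟩ => h d ⟨y, rfl, hyd⟩ hd,
      fun h d ⟨_, hy, hyd⟩ hd => h ⟨d, hd, mem_singleton_iff.1 hy ▸ hyd⟩⟩
  simp only [Blocked, OpenAt, hdesc, not_or, not_exists, not_and]
  grind

theorem interiorAt_cons_cons_cons {x y z : V} :
    InteriorAt (a :: b :: c :: l) x y z ↔
      (x = a ∧ y = b ∧ z = c) ∨ InteriorAt (b :: c :: l) x y z := by
  constructor
  · rintro ⟨_ | ⟨a', s⟩, r, h⟩
    · obtain ⟨rfl, rfl, rfl, -⟩ : a = x ∧ b = y ∧ c = z ∧ l = r := by simpa using h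
      exact .inl ⟨rfl, rfl, rfl⟩
    · exact .inr ⟨s, r, (List.cons.inj h).2⟩
  · rintro (⟨rfl, rfl, rfl⟩ | ⟨s, r, h⟩)
    · exact ⟨[], l, rfl⟩
    · exact ⟨a :: s, r, congrArg (a :: ·) h⟩

theorem not_blocked_of_length_le_two (hp : p.length ≤ 2) : ¬ Blocked D Z p := by
  rw [not_blocked_iff]
  rintro x y z ⟨s, r, rfl⟩
  simp only [List.length_append, List.length_cons] at hp
  omega

theorem not_blocked_cons_cons_cons :
    ¬ Blocked D Z (a :: b :: c :: l) ↔ OpenAt D Z a b c ∧ ¬ Blocked D Z (b :: c :: l) := by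
  simp only [not_blocked_iff, interiorAt_cons_cons_cons]
  grind

theorem Blocked.append (h : Blocked D Z q) : Blocked D Z (p ++ q) := by
  contrapose! h
  rw [not_blocked_iff] at h ⊢
  rintro x y z ⟨s, r, rfl⟩
  exact h x y z ⟨p ++ s, r, (List.append_assoc ..).symm⟩

theorem dSep_iff_forall_singleton : DSep D S T Z ↔ ∀ s ∈ S, ∀ t ∈ T, DSep D {s} {t} Z := by
  simp only [DSep, mem_singleton_iff, forall_eq]

theorem dSep_singleton_iff : DSep D {s} {t} Z ↔ ¬ DConnected D Z s t := by
  simp only [DSep, DConnected, mem_singleton_iff, forall_eq, not_exists, not_and, not_not]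

theorem dConnected_refl : DConnected D Z s s :=
  ⟨[s], isPath_singleton, not_blocked_of_length_le_two (by simp)⟩

theorem DSep.sdiff_right (h : DSep D {s} {t} Z) : DSep D {s} {t} (Z \ {t}) := by
  rw [dSep_singleton_iff] at h ⊢
  rintro ⟨p, hp, hopen⟩
  refine h ⟨p, hp, not_blocked_iff.2 fun x y z hy => ?_⟩
  have hanc : anc D (Z \ {t}) ⊆ anc D Z := anc_mono sdiff_subset
  rcases not_blocked_iff.1 hopen x y z hy with ⟨hxy, hzy, hyZ⟩ | ⟨hcol, hyZ⟩
  · exact .inl ⟨hxy, hzy, hanc hyZ⟩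
  · exact .inr ⟨hcol, fun hZ => hyZ ⟨hZ, hp.ne_last_of_interiorAt hy⟩⟩

-- If `v` already lies on the path, the part of the path from `v` on is itself open.
theorem IsPath.dConnected_of_adj (hp : IsPath (fun a b => D a b ∨ D b a) u t (u :: l))
    (hl : ¬ Blocked D Z (u :: l)) (hvu : D v u ∨ D u v)
    (hopen : ∀ c r, l = c :: r → OpenAt D Z v u c) : DConnected D Z v t := by
  by_cases hv : v ∈ u :: l
  · obtain ⟨q, r, hqr⟩ := List.append_of_mem hv
    rw [hqr] at hp hl
    exact ⟨v :: r, hp.of_append, fun h => hl h.append⟩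
  · refine ⟨v :: u :: l, isPath_cons_cons.2 ⟨hvu, hv, hp⟩, ?_⟩
    cases l with
    | nil => exact not_blocked_of_length_le_two le_rfl
    | cons c r => exact not_blocked_cons_cons_cons.2 ⟨hopen c r rfl, hl⟩

theorem DConnected.of_edge_out (hD : Acyclic D) (h : DConnected D Z u t) (hu : u ∉ Z)
    (huv : D u v) : DConnected D Z v t := by
  obtain ⟨p, hp, hopen⟩ := h
  obtain ⟨l, rfl⟩ := hp.exists_eq_cons
  exact hp.dConnected_of_adj hopen (.inr huv) fun _ _ _ =>
    .inr ⟨fun hcol => hD.not_symm huv hcol.1, hu⟩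

theorem DConnected.of_reachesAvoiding (hD : Acyclic D) (h : DConnected D Z u t) (hu : u ∉ Z)
    (huv : ReachesAvoiding D Z u v) : DConnected D Z v t := by
  have hv : DConnected D Z v t ∧ v ∉ Z := by
    induction huv with
    | refl => exact ⟨h, hu⟩
    | tail _ hxy ih => exact ⟨ih.1.of_edge_out hD ih.2 hxy.1, hxy.2⟩
  exact hv.1

theorem DConnected.of_edge_in (h : DConnected D Z u t) (hu : u ∉ Z) (huZ : u ∈ anc D Z)
    (hvu : D v u) : DConnected D Z v t := by
  obtain ⟨p, hp, hopen⟩ := h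
  obtain ⟨l, rfl⟩ := hp.exists_eq_cons
  refine hp.dConnected_of_adj hopen (.inl hvu) fun c _ _ => ?_
  by_cases hcu : D c u
  · exact .inl ⟨hvu, hcu, huZ⟩
  · exact .inr ⟨fun hcol => hcu hcol.2, hu⟩

theorem DConnected.exists_isPath_of_edge_out (hD : Acyclic D) (h : DConnected D Z u t)
    (hu : u ∉ Z) (huw : D u w) (hw : w ∈ Z) :
    ∃ l, IsPath (fun a b => D a b ∨ D b a) w t (w :: l) ∧ ¬ Blocked D Z (w :: l) ∧
      ∀ c r, l = c :: r → D c w := by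
  obtain ⟨p, hp, hopen⟩ := h
  obtain ⟨l, rfl⟩ := hp.exists_eq_cons
  by_cases hwp : w ∈ u :: l
  · obtain ⟨q, r, hqr⟩ := List.append_of_mem hwp
    rw [hqr] at hp hopen
    refine ⟨r, hp.of_append, fun hb => hopen hb.append, ?_⟩
    rintro c r rfl
    rcases List.eq_nil_or_concat' q with rfl | ⟨q, x, rfl⟩
    · obtain ⟨rfl, -⟩ := List.cons.inj hqr
      exact absurd hw hu
    · rcases not_blocked_iff.1 hopen x w c ⟨q, r, by simp⟩ with ⟨-, hcw, -⟩ | ⟨-, hw'⟩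
      · exact hcw
      · exact absurd hw hw'
  · refine ⟨u :: l, isPath_cons_cons.2 ⟨.inr huw, hwp, hp⟩, ?_, ?_⟩
    · cases l with
      | nil => exact not_blocked_of_length_le_two le_rfl
      | cons c r =>
        exact not_blocked_cons_cons_cons.2 ⟨.inr ⟨fun hcol => hD.not_symm huw hcol.1, hu⟩, hopen⟩
    · rintro c r hcr
      obtain ⟨rfl, -⟩ := List.cons.inj hcr
      exact huw

theorem DConnected.of_common_child (hD : Acyclic D) (h : DConnected D Z u t) (hu : u ∉ Z)
    (huw : D u w) (hvw : D v w) (hw : w ∈ anc D Z) : DConnected D Z v t := by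
  by_cases hwZ : w ∈ Z
  · obtain ⟨l, hl, hopen, hhead⟩ := h.exists_isPath_of_edge_out hD hu huw hwZ
    exact hl.dConnected_of_adj hopen (.inl hvw) fun c r hcr => .inl ⟨hvw, hhead c r hcr, hw⟩
  · exact (h.of_edge_out hD hu huw).of_edge_in hwZ hw hvw

theorem ReachesAvoiding.dConnected (hD : Acyclic D) (h : ReachesAvoiding D Z s t) (hs : s ∉ Z) :
    DConnected D Z s t := by
  obtain ⟨p, hp, hpZ⟩ := h.exists_isPath hs
  refine ⟨p, ⟨hp.1.imp fun _ _ => .inl, hp.2⟩, not_blocked_iff.2 ?_⟩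
  rintro x y z ⟨q, r, rfl⟩
  have hxyz : List.IsChain D (x :: y :: z :: r) := (List.isChain_append.1 hp.1).2.1
  have hyz : D y z := (List.isChain_cons_cons.1 (List.isChain_cons_cons.1 hxyz).2).1
  exact .inr ⟨fun hcol => hD.not_symm hyz hcol.2, hpZ y (by simp)⟩

end DSeparation

section Moralization

variable {V : Type*} {D : V → V → Prop} {B L Z : Set V} {a b s t u v x y : V}
  {l p : List V}

theorem moral_adj :
    (moral D B).Adj u v ↔
      u ≠ v ∧ u ∈ B ∧ v ∈ B ∧ (D u v ∨ D v u ∨ ∃ w ∈ B, D u w ∧ D v w) := by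
  rw [moral, SimpleGraph.fromRel_adj]
  grind

theorem cc_moral_subset (ha : a ∈ B) : cc (moral D B) Z a ⊆ B :=
  cc_subset (fun _ => ha) fun _ _ _ _ hxy _ => (moral_adj.1 hxy).2.2.1

theorem DConnected.of_moral_adj (hD : Acyclic D) (h : DConnected D Z x t) (hx : x ∉ Z) (hy : y ∉ Z)
    (hxy : (moral D (anc D ({s, t} ∪ Z))).Adj x y) : DConnected D Z y t ∨ DConnected D Z s t := by
  obtain ⟨-, hxB, -, hxy | hyx | ⟨w, hwB, hxw, hyw⟩⟩ := moral_adj.1 hxy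
  · exact .inl (h.of_edge_out hD hx hxy)
  · rcases mem_anc_or_reachesAvoiding hxB with hxZ | ⟨-, hxs | hxt⟩
    · exact .inl (h.of_edge_in hx hxZ hyx)
    · exact .inr (h.of_reachesAvoiding hD hx hxs)
    · exact .inl (ReachesAvoiding.dConnected hD (.head ⟨hyx, hx⟩ hxt) hy)
  · rcases mem_anc_or_reachesAvoiding hwB with hwZ | ⟨hw, hws | hwt⟩
    · exact .inl (h.of_common_child hD hx hxw hyw hwZ)
    · exact .inr ((h.of_edge_out hD hx hxw).of_reachesAvoiding hD hw hws)
    · exact .inl (ReachesAvoiding.dConnected hD (.head ⟨hyw, hw⟩ hwt) hy)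

theorem dConnected_of_mem_cc_moral (hD : Acyclic D)
    (h : t ∈ cc (moral D (anc D ({s, t} ∪ Z))) Z s) : DConnected D Z s t := by
  have hsub : cc (moral D (anc D ({s, t} ∪ Z))) Z t ⊆
      {x | DConnected D Z x t ∨ DConnected D Z s t} := by
    refine cc_subset (fun _ => .inl dConnected_refl) ?_
    rintro x hx (hxt | hst) y hxy hy
    · exact hxt.of_moral_adj hD (notMem_of_mem_cc hx) hy hxy
    · exact .inr hst
  exact or_self_iff.1 (hsub (mem_cc_symm h))

-- The path can only turn back at a collider, which is an ancestor of `Z`; without one it is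
-- directed up to `t`.
theorem mem_of_open_edge_out (hB : ∀ u v, D u v → v ∈ B → u ∈ B) (hZ : anc D Z ⊆ B) (ht : t ∈ B)
    (hp : IsPath (fun a b => D a b ∨ D b a) a t (a :: b :: l)) (hopen : ¬ Blocked D Z (a :: b :: l))
    (hab : D a b) : b ∈ B := by
  induction l generalizing a b with
  | nil =>
    obtain rfl : b = t := Option.some.inj hp.2.2.1
    exact ht
  | cons c l ih =>
    obtain ⟨hb, hopen⟩ := not_blocked_cons_cons_cons.1 hopen
    obtain ⟨-, -, hp⟩ := isPath_cons_cons.1 hp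
    rcases hb with ⟨-, -, hbZ⟩ | ⟨hncol, -⟩
    · exact hZ hbZ
    · have hbc : D b c := (isPath_cons_cons.1 hp).1.resolve_right fun hcb => hncol ⟨hab, hcb⟩
      exact hB b c hbc (ih hp hopen hbc)

theorem notMem_of_open_edge_out (hD : Acyclic D) (ht : t ∉ Z)
    (hp : IsPath (fun a b => D a b ∨ D b a) a t (a :: l)) (hopen : ¬ Blocked D Z (b :: a :: l))
    (hab : D a b) : a ∉ Z := by
  cases l with
  | nil =>
    obtain rfl : a = t := Option.some.inj hp.2.2.1
    exact ht
  | cons c l =>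
    rcases (not_blocked_cons_cons_cons.1 hopen).1 with ⟨hba, -⟩ | ⟨-, ha⟩
    · exact absurd hba (hD.not_symm hab)
    · exact ha

-- The moral path is the open path with its colliders skipped where they lie in `Z`.
theorem exists_moral_adj_of_not_blocked (hD : Acyclic D) (hB : ∀ u v, D u v → v ∈ B → u ∈ B)
    (hZ : anc D Z ⊆ B) (htB : t ∈ B) (htZ : t ∉ Z) (haB : a ∈ B)
    (hp : IsPath (fun a b => D a b ∨ D b a) a t (a :: b :: l))
    (hopen : ¬ Blocked D Z (a :: b :: l)) :
    ∃ c r, (moral D B).Adj a c ∧ c ∉ Z ∧ IsPath (fun a b => D a b ∨ D b a) c t (c :: r) ∧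
      ¬ Blocked D Z (c :: r) ∧ r.length ≤ l.length := by
  obtain ⟨hab, hal, hpb⟩ := isPath_cons_cons.1 hp
  have hopenb : ¬ Blocked D Z (b :: l) := fun h => hopen (h.append (p := [a]))
  have hbB : b ∈ B := hab.elim (mem_of_open_edge_out hB hZ htB hp hopen) fun hba => hB b a hba haB
  by_cases hbZ : b ∈ Z
  · cases l with
    | nil =>
      obtain rfl : b = t := Option.some.inj hpb.2.2.1
      exact absurd hbZ htZ
    | cons c r =>
      obtain ⟨-, -, hpc⟩ := isPath_cons_cons.1 hpb
      rcases (not_blocked_cons_cons_cons.1 hopen).1 with ⟨hab, hcb, -⟩ | ⟨-, hbZ'⟩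
      · have hac : a ≠ c := fun h => hal (by simp [h])
        exact ⟨c, r, moral_adj.2 ⟨hac, haB, hB c b hcb hbB, .inr (.inr ⟨b, hbB, hab, hcb⟩)⟩,
          notMem_of_open_edge_out hD htZ hpc hopenb hcb, hpc,
          fun h => hopenb (h.append (p := [b])), by simp⟩
      · exact absurd hbZ hbZ'
  · have hab_ne : a ≠ b := fun h => hal (h ▸ List.mem_cons_self)
    exact ⟨b, l, moral_adj.2 ⟨hab_ne, haB, hbB, or_assoc.1 (.inl hab)⟩, hbZ, hpb, hopenb, le_rfl⟩

theorem mem_cc_moral_of_not_blocked (hD : Acyclic D) (hB : ∀ u v, D u v → v ∈ B → u ∈ B)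
    (hZ : anc D Z ⊆ B) (htB : t ∈ B) (htZ : t ∉ Z) (haB : a ∈ B) (haZ : a ∉ Z)
    (hp : IsPath (fun a b => D a b ∨ D b a) a t p) (hopen : ¬ Blocked D Z p) :
    t ∈ cc (moral D B) Z a := by
  induction hn : p.length using Nat.strong_induction_on generalizing a p with
  | _ n ih =>
    obtain ⟨l, rfl⟩ := hp.exists_eq_cons
    cases l with
    | nil =>
      obtain rfl : a = t := Option.some.inj hp.2.2.1
      exact mem_cc_self haZ
    | cons b l =>
      obtain ⟨c, r, hac, hcZ, hpc, hopenc, hlen⟩ :=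
        exists_moral_adj_of_not_blocked hD hB hZ htB htZ haB hp hopen
      have hlt : (c :: r).length < n := by
        simp only [List.length_cons] at hn ⊢
        omega
      exact mem_cc_trans (mem_cc_of_adj (mem_cc_self haZ) hac hcZ)
        (ih _ hlt (moral_adj.1 hac).2.2.1 hcZ hpc hopenc rfl)

theorem dSep_iff_uSep_moral (hD : Acyclic D) (hs : s ∉ Z) (ht : t ∉ Z) :
    DSep D {s} {t} Z ↔ USep (moral D (anc D ({s, t} ∪ Z))) {s} {t} Z := by
  rw [dSep_singleton_iff, uSep_singleton_iff, not_iff_not]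
  refine ⟨?_, dConnected_of_mem_cc_moral hD⟩
  rintro ⟨p, hp, hopen⟩
  exact mem_cc_moral_of_not_blocked hD (fun _ _ => mem_anc_of_edge)
    (anc_mono subset_union_right) (subset_anc (by simp)) ht (subset_anc (by simp)) hs hp hopen

theorem DSep.inter_anc (hD : Acyclic D) (hs : s ∉ Z) (ht : t ∉ Z) (hLZ : L ⊆ Z)
    (h : DSep D {s} {t} Z) : DSep D {s} {t} (Z ∩ anc D ({s, t} ∪ L)) := by
  have hL : L ⊆ Z ∩ anc D ({s, t} ∪ L) :=
    subset_inter hLZ (subset_union_right.trans subset_anc)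
  have hsub : anc D ({s, t} ∪ L) ⊆ anc D ({s, t} ∪ Z) := anc_mono (union_subset_union_right _ hLZ)
  rw [dSep_iff_uSep_moral hD hs ht, uSep_singleton_iff] at h
  rw [dSep_iff_uSep_moral hD (fun h => hs h.1) (fun h => ht h.1),
    anc_union_eq hL inter_subset_right, uSep_singleton_iff]
  refine fun hst => h (cc_subset_cc ?_ ?_ hst)
  · intro x y _ _ hxy
    obtain ⟨hne, hx, hy, hedge⟩ := moral_adj.1 hxy
    exact moral_adj.2 ⟨hne, hsub hx, hsub hy,
      hedge.imp_right (.imp_right fun ⟨w, hw, hxw⟩ => ⟨w, hsub hw, hxw⟩)⟩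
  · intro x hx hxZ
    exact notMem_of_mem_cc hx ⟨hxZ, cc_moral_subset (subset_anc (by simp)) hx⟩

end Moralization

section ProperBackDoor

variable {V : Type*} {D : V → V → Prop} {A Y s t : V} {L U W Z : Set V}

theorem Acyclic.pbd (hD : Acyclic D) : Acyclic (pbd D A Y) :=
  fun u v huv hvu => hD u v huv.1 (hvu.lift id fun _ _ => And.left)

theorem left_mem_forb : A ∈ forb D A Y :=
  .inr rfl

theorem anc_subset_compl_cn (hZ : Z ∩ forb D A Y = ∅) : anc D Z ⊆ (cn D A Y)ᶜ := by
  rintro v ⟨z, hz, hvz⟩ hv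
  exact eq_empty_iff_forall_notMem.1 hZ z ⟨hz, .inl ⟨v, hv, hvz⟩⟩

-- Deleting edges out of `A` loses no ancestors, as `A` itself belongs to the target set.
theorem anc_pbd : anc (pbd D A Y) ({A, Y} ∪ L) = ancAYL D A Y L := by
  refine Subset.antisymm ?_ ?_
  · rintro u ⟨v, hv, huv⟩
    exact ⟨v, hv, huv.lift id fun _ _ => And.left⟩
  · rintro u ⟨v, hv, huv⟩
    induction huv using ReflTransGen.head_induction_on with
    | refl => exact subset_anc hv
    | @head u w huw _ ih =>
      by_cases hu : u = A
      · exact subset_anc (by simp [hu])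
      · exact mem_anc_of_edge ⟨huw, fun h => hu h.1⟩ ih

theorem dSep_pbd_iff_uSep_H0 (hD : Acyclic D) (hLZ : L ⊆ Z) (hZ : Z ⊆ ancAYL D A Y L)
    (hA : A ∉ Z) (hY : Y ∉ Z) :
    DSep (pbd D A Y) {A} {Y} Z ↔ USep (H0 D A Y L) {A} {Y} Z := by
  rw [dSep_iff_uSep_moral hD.pbd hA hY, anc_union_eq hLZ (hZ.trans anc_pbd.ge), anc_pbd, H0]

theorem dSep_of_uSep_H0 (hD : Acyclic D) (hUW : U ⊆ W) (hs : s ∉ W) (ht : t ∉ W)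
    (hW : {s, t} ∪ W ⊆ ancAYL D A Y L)
    (hedge : ∀ x w, x ∉ W → w ∈ anc D ({s, t} ∪ W) → D x w → pbd D A Y x w)
    (h : USep (H0 D A Y L) {s} {t} U) : DSep D {s} {t} W := by
  have hanc : anc D ({s, t} ∪ W) ⊆ ancAYL D A Y L := anc_subset_anc hW
  rw [uSep_singleton_iff] at h
  rw [dSep_iff_uSep_moral hD hs ht, uSep_singleton_iff]
  refine fun hst => h (cc_subset_cc ?_ (fun x hx hxU => notMem_of_mem_cc hx (hUW hxU)) hst)
  intro x y hx hy hxy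
  obtain ⟨hne, hxB, hyB, hxy⟩ := moral_adj.1 hxy
  refine moral_adj.2 ⟨hne, hanc hxB, hanc hyB, ?_⟩
  exact hxy.imp (hedge x y hx hyB) (.imp (hedge y x hy hxB) fun ⟨w, hw, hxw, hyw⟩ =>
    ⟨w, hanc hw, hedge x w hx hw hxw, hedge y w hy hw hyw⟩)

end ProperBackDoor

section AdjustmentGraph

variable {V : Type*} {D : V → V → Prop} {A Y u v : V} {L N Z : Set V}

theorem left_mem_H1verts : A ∈ H1verts D A Y L N :=
  ⟨subset_anc (by simp), fun h => h.1.2 (by simp)⟩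

theorem right_mem_H1verts : Y ∈ H1verts D A Y L N :=
  ⟨subset_anc (by simp), fun h => h.1.2 (by simp)⟩

theorem mem_H1verts_iff (hA : v ≠ A) (hY : v ≠ Y) :
    v ∈ H1verts D A Y L N ↔ v ∈ ancAYL D A Y L ∧ v ∉ forb D A Y ∧ v ∈ N := by
  simp only [H1verts, Ignore, mem_sdiff, mem_inter_iff, mem_union, mem_insert_iff,
    mem_singleton_iff, mem_univ]
  tauto

theorem subset_H1verts_iff (hA : A ∉ Z) (hY : Y ∉ Z) :
    Z ⊆ H1verts D A Y L N ↔ Z ⊆ ancAYL D A Y L ∧ Z ∩ forb D A Y = ∅ ∧ Z ⊆ N := by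
  have hmem : ∀ z ∈ Z, (z ∈ H1verts D A Y L N ↔ _) := fun z hz =>
    mem_H1verts_iff (ne_of_mem_of_not_mem hz hA) (ne_of_mem_of_not_mem hz hY)
  rw [← disjoint_iff_inter_eq_empty, disjoint_left]
  simp only [subset_def, ← forall₂_and]
  exact forall₂_congr hmem

theorem H1_adj :
    (H1 D A Y L N).Adj u v ↔
      u ≠ v ∧ u ∈ H1verts D A Y L N ∧ v ∈ H1verts D A Y L N ∧
        (v ∈ cc (H0 D A Y L) ({u, v} ∪ Ignore D A Y L N)ᶜ u ∨
          (u ∈ ({A, Y} : Set V) ∧ v ∈ L) ∨ (v ∈ ({A, Y} : Set V) ∧ u ∈ L)) := by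
  have hpath : ∀ a b : V, (∃ p : List V, IsPath (H0 D A Y L).Adj a b p ∧
      ∀ x ∈ p, x ≠ a → x ≠ b → x ∈ Ignore D A Y L N) ↔
        b ∈ cc (H0 D A Y L) ({a, b} ∪ Ignore D A Y L N)ᶜ a := fun a b => by
    simp only [cc, mem_ofPred_eq, mem_compl_iff, not_not, mem_union, mem_insert_iff,
      mem_singleton_iff, or_assoc]
    simp only [or_iff_not_imp_left, ne_eq]
  have hsymm : u ∈ cc (H0 D A Y L) ({v, u} ∪ Ignore D A Y L N)ᶜ v ↔
      v ∈ cc (H0 D A Y L) ({u, v} ∪ Ignore D A Y L N)ᶜ u := by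
    rw [pair_comm v u]
    exact ⟨mem_cc_symm, mem_cc_symm⟩
  simp only [H1, SimpleGraph.fromRel_adj, hpath, hsymm, mem_insert_iff, mem_singleton_iff]
  tauto

theorem support_H1_subset : (H1 D A Y L N).support ⊆ H1verts D A Y L N :=
  fun _ ⟨_, h⟩ => (H1_adj.1 h).2.1

theorem cc_H1_subset_cc_H0 (hLZ : L ⊆ Z) (hZ : Z ⊆ H1verts D A Y L N) :
    cc (H1 D A Y L N) Z u ⊆ cc (H0 D A Y L) Z u := by
  refine cc_subset mem_cc_self ?_
  intro x _ hx y hxy hy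
  have hxZ : x ∉ Z := notMem_of_mem_cc hx
  obtain ⟨-, -, -, hpath | ⟨-, hyL⟩ | ⟨-, hxL⟩⟩ := H1_adj.1 hxy
  · refine mem_cc_trans hx (cc_subset_cc (fun _ _ _ _ => id) ?_ hpath)
    intro w hw hwZ
    rcases not_notMem.1 (notMem_of_mem_cc hw) with (rfl | rfl) | hwI
    · exact hxZ hwZ
    · exact hy hwZ
    · exact (hZ hwZ).2 hwI
  · exact absurd (hLZ hyL) hy
  · exact absurd (hLZ hxL) hxZ

-- Along a path of `H⁰`, keep track of the last vertex `w` visited outside `Ignore`.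
theorem mem_cc_H1_of_mem_cc_H0 (hu : u ∈ H1verts D A Y L N) (hv : v ∈ H1verts D A Y L N)
    (h : v ∈ cc (H0 D A Y L) Z u) : v ∈ cc (H1 D A Y L N) Z u := by
  have hsub : cc (H0 D A Y L) Z u ⊆ {x | ∃ w ∈ H1verts D A Y L N, w ∈ cc (H1 D A Y L N) Z u ∧
      x ∈ cc (H0 D A Y L) ({w} ∪ Ignore D A Y L N)ᶜ w} := by
    refine cc_subset (fun huZ => ⟨u, hu, mem_cc_self huZ, mem_cc_self (by simp)⟩) ?_
    rintro x - ⟨w, hw, hwu, hxw⟩ y hxy hyZ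
    by_cases hy : y ∈ H1verts D A Y L N
    · refine ⟨y, hy, ?_, mem_cc_self (by simp)⟩
      by_cases hwy : w = y
      · exact hwy ▸ hwu
      · have hyw : y ∈ cc (H0 D A Y L) ({w, y} ∪ Ignore D A Y L N)ᶜ w := by
          have hxwy := cc_subset_cc (U' := ({w, y} ∪ Ignore D A Y L N)ᶜ)
            (fun _ _ _ _ => id) (fun z hz hz' => notMem_of_mem_cc hz fun hzw =>
              hz' (hzw.imp_left .inl)) hxw
          exact mem_cc_of_adj hxwy hxy (by simp)
        exact mem_cc_of_adj hwu (H1_adj.2 ⟨hwy, hw, hy, .inl hyw⟩) hyZ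
    · have hyI : y ∈ Ignore D A Y L N :=
        not_notMem.1 fun hyI => hy ⟨(moral_adj.1 hxy).2.2.1, hyI⟩
      exact ⟨w, hw, hwu, mem_cc_of_adj hxw hxy (not_notMem.2 (.inr hyI))⟩
  obtain ⟨w, -, hwu, hvw⟩ := hsub h
  obtain rfl : v = w := (not_notMem.1 (notMem_of_mem_cc hvw)).resolve_right hv.2
  exact hwu

theorem uSep_H1_iff_uSep_H0 (hLZ : L ⊆ Z) (hZ : Z ⊆ H1verts D A Y L N)
    (hu : u ∈ H1verts D A Y L N) (hv : v ∈ H1verts D A Y L N) :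
    USep (H1 D A Y L N) {u} {v} Z ↔ USep (H0 D A Y L) {u} {v} Z := by
  rw [uSep_singleton_iff, uSep_singleton_iff, not_iff_not]
  exact ⟨fun h => cc_H1_subset_cc_H0 hLZ hZ h, mem_cc_H1_of_mem_cc_H0 hu hv⟩

end AdjustmentGraph

section AdjustmentCriterion

variable {V : Type*} {D : V → V → Prop} {A Y l x : V} {L N Z Z₁ Z₂ : Set V}

theorem GAC.left_notMem (h : GAC D A Y L N Z) : A ∉ Z :=
  fun hA => eq_empty_iff_forall_notMem.1 h.2.1 A ⟨hA, left_mem_forb⟩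

theorem Admissible.subset_H1verts_sdiff (hY : Y ∉ L) (h : Admissible D A Y L N) :
    L ⊆ H1verts D A Y L N \ {A, Y} := by
  obtain ⟨Z, hZ⟩ := h
  have hA : A ∉ L := fun hA => hZ.left_notMem (hZ.2.2.1 hA)
  have hL : L ⊆ H1verts D A Y L N := (subset_H1verts_iff hA hY).2
    ⟨subset_union_right.trans subset_anc,
      subset_empty_iff.1 (hZ.2.1 ▸ inter_subset_inter_left _ hZ.2.2.1), hZ.2.2.1.trans hZ.2.2.2⟩
  rintro l hl
  refine ⟨hL hl, ?_⟩
  rintro (rfl | rfl)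
  exacts [hA hl, hY hl]

theorem GAC.restrict (hD : Acyclic D) (hY : Y ∉ L) (h : GAC D A Y L N Z) :
    GAC D A Y L N ((Z \ {Y}) ∩ ancAYL D A Y L) := by
  have hA : A ∉ Z := h.left_notMem
  obtain ⟨hsep, hforb, hLZ, hZN⟩ := h
  have hLZY : L ⊆ Z \ {Y} := subset_sdiff_singleton hLZ hY
  have hsub : (Z \ {Y}) ∩ ancAYL D A Y L ⊆ Z := inter_subset_left.trans sdiff_subset
  refine ⟨?_, ?_, subset_inter hLZY (subset_union_right.trans subset_anc), hsub.trans hZN⟩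
  · rw [← anc_pbd]
    exact hsep.sdiff_right.inter_anc hD.pbd (fun h => hA h.1) (fun h => h.2 rfl) hLZY
  · exact subset_empty_iff.1 (hforb ▸ inter_subset_inter_left _ hsub)

theorem H1_adj_of_mem (hL : L ⊆ H1verts D A Y L N \ {A, Y}) (hx : x ∈ ({A, Y} : Set V))
    (hl : l ∈ L) : (H1 D A Y L N).Adj x l := by
  have hxV : x ∈ H1verts D A Y L N := by
    rcases hx with rfl | rfl
    exacts [left_mem_H1verts, right_mem_H1verts]
  exact H1_adj.2 ⟨fun h => (hL hl).2 (h ▸ hx), hxV, (hL hl).1, .inr (.inl ⟨hx, hl⟩)⟩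

theorem subset_of_isCut_H1 (hL : L ⊆ H1verts D A Y L N \ {A, Y})
    (h : IsCut (H1verts D A Y L N) (H1 D A Y L N) A Y Z) : L ⊆ Z :=
  fun _ hl => h.mem_of_adj (H1_adj_of_mem hL (by simp) hl) (H1_adj_of_mem hL (by simp) hl)

theorem isCut_H1_iff (hD : Acyclic D) (hL : L ⊆ H1verts D A Y L N \ {A, Y}) :
    IsCut (H1verts D A Y L N) (H1 D A Y L N) A Y Z ↔
      GAC D A Y L N Z ∧ Z ⊆ ancAYL D A Y L ∧ Y ∉ Z := by
  constructor
  · intro h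
    obtain ⟨hZ, hA, hY, hcc⟩ := isCut_iff.1 h
    have hLZ : L ⊆ Z := subset_of_isCut_H1 hL h
    obtain ⟨hanc, hforb, hN⟩ := (subset_H1verts_iff hA hY).1 hZ
    refine ⟨⟨?_, hforb, hLZ, hN⟩, hanc, hY⟩
    rwa [dSep_pbd_iff_uSep_H0 hD hLZ hanc hA hY,
      ← uSep_H1_iff_uSep_H0 hLZ hZ left_mem_H1verts right_mem_H1verts, uSep_singleton_iff]
  · rintro ⟨h, hanc, hY⟩
    have hA : A ∉ Z := h.left_notMem
    obtain ⟨hsep, hforb, hLZ, hN⟩ := h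
    have hZ : Z ⊆ H1verts D A Y L N := (subset_H1verts_iff hA hY).2 ⟨hanc, hforb, hN⟩
    refine isCut_iff.2 ⟨hZ, hA, hY, ?_⟩
    rwa [← uSep_singleton_iff, uSep_H1_iff_uSep_H0 hLZ hZ left_mem_H1verts right_mem_H1verts,
      ← dSep_pbd_iff_uSep_H0 hD hLZ hanc hA hY]

theorem Admissible.exists_isCut_H1 (hD : Acyclic D) (hY : Y ∉ L) (h : Admissible D A Y L N) :
    ∃ Z, IsCut (H1verts D A Y L N) (H1 D A Y L N) A Y Z := by
  obtain ⟨Z, hZ⟩ := id h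
  exact ⟨(Z \ {Y}) ∩ ancAYL D A Y L, (isCut_H1_iff hD (h.subset_H1verts_sdiff hY)).2
    ⟨hZ.restrict hD hY, inter_subset_right, fun hY => hY.1.2 rfl⟩⟩

theorem minimalGAC_iff_minimalCut (hD : Acyclic D) (hL : L ⊆ H1verts D A Y L N \ {A, Y}) :
    MinimalGAC D A Y L N Z ↔ MinimalCut (H1verts D A Y L N) (H1 D A Y L N) A Y Z := by
  have hYL : Y ∉ L := fun hY => (hL hY).2 (by simp)
  constructor
  · rintro ⟨hZ, hmin⟩
    have hsub : (Z \ {Y}) ∩ ancAYL D A Y L ⊆ Z := inter_subset_left.trans sdiff_subset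
    have heq : (Z \ {Y}) ∩ ancAYL D A Y L = Z := by
      by_contra hne
      exact hmin _ (hsub.ssubset_of_ne hne) (hZ.restrict hD hYL)
    refine ⟨(isCut_H1_iff hD hL).2 ⟨hZ, heq ▸ inter_subset_right, fun hY => ?_⟩,
      fun Z' hZ' hcut => hmin Z' hZ' ((isCut_H1_iff hD hL).1 hcut).1⟩
    rw [← heq] at hY
    exact hY.1.2 rfl
  · rintro ⟨hcut, hmin⟩
    obtain ⟨hZ, hanc, hY⟩ := (isCut_H1_iff hD hL).1 hcut
    refine ⟨hZ, fun Z' hZ' h => hmin Z' hZ' ((isCut_H1_iff hD hL).2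
      ⟨h, hZ'.subset.trans hanc, fun hY' => hY (hZ'.subset hY')⟩)⟩

theorem TLE.dSep_right (hD : Acyclic D) (hL : L ⊆ H1verts D A Y L N \ {A, Y})
    (h₁ : IsCut (H1verts D A Y L N) (H1 D A Y L N) A Y Z₁)
    (h₂ : IsCut (H1verts D A Y L N) (H1 D A Y L N) A Y Z₂) (h : TLE (H1 D A Y L N) A Y Z₁ Z₂) :
    DSep D {Y} (Z₂ \ Z₁) ({A} ∪ Z₁) := by
  obtain ⟨⟨-, -, hLZ₁, -⟩, hanc₁, hY₁⟩ := (isCut_H1_iff hD hL).1 h₁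
  obtain ⟨-, hanc₂, -⟩ := (isCut_H1_iff hD hL).1 h₂
  have hYA : Y ∉ ({A} : Set V) ∪ Z₁ := by
    rintro (rfl | hY)
    exacts [h₁.ne rfl, hY₁ hY]
  rw [dSep_iff_forall_singleton]
  rintro _ rfl z ⟨hz₂, hz₁⟩
  have hzA : z ∉ ({A} : Set V) ∪ Z₁ := by
    rintro (rfl | hz)
    exacts [(isCut_iff.1 h₂).2.1 hz₂, hz₁ hz]
  refine dSep_of_uSep_H0 hD subset_union_right hYA hzA ?_ ?_
    ((uSep_H1_iff_uSep_H0 hLZ₁ h₁.1 right_mem_H1verts (h₂.1 hz₂)).1 ?_)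
  · exact union_subset (pair_subset (subset_anc (by simp)) (hanc₂ hz₂))
      (union_subset (singleton_subset_iff.2 (subset_anc (by simp))) hanc₁)
  · exact fun x w hx _ hxw => ⟨hxw, fun hxA => hx (.inl hxA.1)⟩
  · exact uSep_singleton_iff.2 (uSep_iff_forall_notMem_cc.1 h.1 z ⟨hz₂, hz₁⟩)

theorem TLE.dSep_left (hD : Acyclic D) (hL : L ⊆ H1verts D A Y L N \ {A, Y})
    (h₁ : IsCut (H1verts D A Y L N) (H1 D A Y L N) A Y Z₁)
    (h₂ : IsCut (H1verts D A Y L N) (H1 D A Y L N) A Y Z₂) (h : TLE (H1 D A Y L N) A Y Z₁ Z₂) :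
    DSep D {A} (Z₁ \ Z₂) Z₂ := by
  obtain ⟨⟨-, hforb₁, -, -⟩, hanc₁, -⟩ := (isCut_H1_iff hD hL).1 h₁
  obtain ⟨hZ₂, hanc₂, -⟩ := (isCut_H1_iff hD hL).1 h₂
  rw [dSep_iff_forall_singleton]
  rintro _ rfl z ⟨hz₁, hz₂⟩
  refine dSep_of_uSep_H0 hD subset_rfl hZ₂.left_notMem hz₂ ?_ ?_
    ((uSep_H1_iff_uSep_H0 hZ₂.2.2.1 h₂.1 left_mem_H1verts (h₁.1 hz₁)).1 ?_)
  · exact union_subset (pair_subset (subset_anc (by simp)) (hanc₁ hz₁)) hanc₂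
  · rintro x w - hw hxw
    refine ⟨hxw, ?_⟩
    rintro ⟨rfl, hwcn⟩
    obtain ⟨v, (rfl | rfl) | hv, hwv⟩ := hw
    · exact hD _ _ hxw hwv
    · exact anc_subset_compl_cn hforb₁ ⟨_, hz₁, hwv⟩ hwcn
    · exact anc_subset_compl_cn hZ₂.2.1 ⟨_, hv, hwv⟩ hwcn
  · exact uSep_singleton_iff.2 (uSep_iff_forall_notMem_cc.1 h.2 z ⟨hz₁, hz₂⟩)

end AdjustmentCriterion

theorem stmt12_general {V : Type*} (D : V → V → Prop) (hacy : Acyclic D) (A Y : V) (L N : Set V)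
    (hLY : Y ∉ L) (hadm : Admissible D A Y L N) :
    MinimalGAC D A Y L N (closestCut (H1 D A Y L N) A Y) ∧
    ∀ Z, MinimalGAC D A Y L N Z →
      DSep D {Y} (Z \ closestCut (H1 D A Y L N) A Y) ({A} ∪ closestCut (H1 D A Y L N) A Y) ∧
      DSep D {A} (closestCut (H1 D A Y L N) A Y \ Z) Z := by
  have hL : L ⊆ H1verts D A Y L N \ {A, Y} := hadm.subset_H1verts_sdiff hLY
  obtain ⟨Z₀, hcut⟩ := hadm.exists_isCut_H1 hacy hLY
  have hO : MinimalCut (H1verts D A Y L N) (H1 D A Y L N) A Y (closestCut (H1 D A Y L N) A Y) :=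
    minimalCut_closestCut support_H1_subset hcut.ne hcut.not_adj
  refine ⟨(minimalGAC_iff_minimalCut hacy hL).2 hO, fun Z hZ => ?_⟩
  have hZcut := (minimalGAC_iff_minimalCut hacy hL).1 hZ
  have hle : TLE (H1 D A Y L N) A Y (closestCut (H1 D A Y L N) A Y) Z := tle_closestCut hZcut
  exact ⟨hle.dSep_right hacy hL hO.1 hZcut.1, hle.dSep_left hacy hL hO.1 hZcut.1⟩

/-- Theorem 2, part 2 (statement 12): if `(L, N)` is admissible then
`O_min = ∂_{H¹}(cc(nb_{H¹}(Y), A, H¹))` is a minimal set satisfying the graphical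
adjustment criterion and, for every minimal set `Z` satisfying the criterion,
`Y ⊥⊥_G Z \ O_min | {A} ∪ O_min` and `A ⊥⊥_G O_min \ Z | Z`. -/
theorem stmt12 {V : Type*} [Fintype V] [DecidableEq V]
    (D : V → V → Prop) (hacy : Acyclic D)
    (A Y : V) (L N : Set V)
    (hAY : A ≠ Y) (hAancY : Relation.ReflTransGen D A Y)
    (hLnd : L ∩ desc D {A} = ∅) (hLY : Y ∉ L)
    (hN : {A, Y} ∪ L ⊆ N)
    (hadm : Admissible D A Y L N) :
    MinimalGAC D A Y L N
        (bdry (H1 D A Y L N) (cc (H1 D A Y L N) ((H1 D A Y L N).neighborSet Y) A)) ∧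
    ∀ Z, MinimalGAC D A Y L N Z →
      DSep D {Y}
        (Z \ bdry (H1 D A Y L N) (cc (H1 D A Y L N) ((H1 D A Y L N).neighborSet Y) A))
        ({A} ∪ bdry (H1 D A Y L N) (cc (H1 D A Y L N) ((H1 D A Y L N).neighborSet Y) A)) ∧
      DSep D {A}
        (bdry (H1 D A Y L N) (cc (H1 D A Y L N) ((H1 D A Y L N).neighborSet Y) A) \ Z)
        Z := by
  exact stmt12_general D hacy A Y L N hLY hadm

end CausalGraph
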